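/- The graph G_1 is connected and has diameter at most 8: any two vertices of G_1 are at distance at most 8. -/

import Mathlib

/-- `W` is an `i`-packing in `G`: any two distinct vertices of `W` are at
graph distance greater than `i` in `G`. -/
def IsPacking {V : Type*} (G : SimpleGraph V) (i : ℕ) (W : Set V) : Prop :=
  ∀ u ∈ W, ∀ v ∈ W, u ≠ v → i < G.dist u v

/-- `c` is a `k`-packing coloring of `G`: every color lies in `{1, …, k}` and
for each `i ∈ {1, …, k}` the color class `c⁻¹(i)` is an `i`-packing. -/
def IsPackingColoring {V : Type*} (G : SimpleGraph V) (k : ℕ) (c : V → ℕ) : Prop :=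
  (∀ v, 1 ≤ c v ∧ c v ≤ k) ∧ ∀ i, 1 ≤ i → i ≤ k → IsPacking G i {v | c v = i}

/-- The packing chromatic number: the least `k` admitting a `k`-packing coloring. -/
noncomputable def packingChromaticNumber {V : Type*} (G : SimpleGraph V) : ℕ :=
  sInf {k | ∃ c : V → ℕ, IsPackingColoring G k c}


/-- Edges of `H`; vertices `y1,…,y7` are `0,…,6`, `z1,…,z7` are `7,…,13`,
and `w` is `14`. -/
def Hedges : List (Fin 15 × Fin 15) :=
  [(0,1),(1,2),(2,6),(6,5),(5,4),(4,0),(1,3),(3,5),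
   (7,8),(8,9),(9,13),(13,12),(12,11),(11,7),(8,10),(10,12),
   (3,14),(14,10),(2,7),(4,13)]

/-- The graph `H`. -/
def Hgraph : SimpleGraph (Fin 15) :=
  SimpleGraph.fromRel (fun u v => (u, v) ∈ Hedges)

/-- Glue two disjoint copies of `G` together with five new vertices
`Sum.inr (Sum.inr i)` for `i : Fin 5`: the `i`-th new vertex is adjacent
exactly to `p i` in the first copy and to `q i` in the second copy. -/
def glue {V : Type*} (G : SimpleGraph V) (p q : Fin 5 → V) :
    SimpleGraph (V ⊕ V ⊕ Fin 5) :=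
  SimpleGraph.fromRel (fun u v =>
    match u, v with
    | Sum.inl a, Sum.inl b => G.Adj a b
    | Sum.inr (Sum.inl a), Sum.inr (Sum.inl b) => G.Adj a b
    | Sum.inr (Sum.inr i), Sum.inl a => a = p i
    | Sum.inr (Sum.inr i), Sum.inr (Sum.inl b) => b = q i
    | _, _ => False)

/-- Attachment points of `a,b,c,d,x` in the first copy (`H'`):
`a ↦ y5`, `b ↦ z7`, `c ↦ y3`, `d ↦ z1`, `x ↦ w`. -/
def pH : Fin 5 → Fin 15 := ![4, 13, 2, 7, 14]

/-- Attachment points of `a,b,c,d,x` in the second copy (`H''`):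
`a ↦ y1`, `b ↦ z3`, `c ↦ z5`, `d ↦ y7`, `x ↦ w`. -/
def qH : Fin 5 → Fin 15 := ![0, 9, 11, 6, 14]

/-- The graph `G₀`: two disjoint copies of `H` plus the five vertices
`a,b,c,d,x`, which are `Sum.inr (Sum.inr 0), …, Sum.inr (Sum.inr 4)`. -/
def G₀ : SimpleGraph (Fin 15 ⊕ Fin 15 ⊕ Fin 5) := glue Hgraph pH qH

/-- The vertex type of `G_k`. -/
def Vt : ℕ → Type
  | 0 => Fin 15 ⊕ Fin 15 ⊕ Fin 5
  | k + 1 => Vt k ⊕ Vt k ⊕ Fin 5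

/-- The five distinguished vertices `a,b,c,d,x` of `G_k`. -/
def distV : (k : ℕ) → Fin 5 → Vt k
  | 0, i => Sum.inr (Sum.inr i)
  | _ + 1, i => Sum.inr (Sum.inr i)

/-- The graph `G_k`: for `k ≥ 1` it is obtained from two disjoint copies of
`G_{k-1}` by adding five new vertices, the `i`-th of which is adjacent exactly
to the `i`-th distinguished vertex of each of the two copies. -/
def Gk : (k : ℕ) → SimpleGraph (Vt k)
  | 0 => G₀
  | k + 1 => glue (Gk k) (distV k) (distV k)

/-! In `G₀`, any two vertices are joined by a walk of length at most `6` through one of the five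
distinguished vertices. Such a walk detours into the other copy of `G₀` inside `G₁` at the cost of
two extra edges, and a new vertex of `G₁` is one edge away from its distinguished vertex in either
copy; so every distance in `G₁` is at most `6 + 2`. -/

section Metric

variable {V W : Type*} {G : SimpleGraph V} {G' : SimpleGraph W}

theorem edist_map_le (f : G →g G') (u v : V) : G'.edist (f u) (f v) ≤ G.edist u v :=
  le_iInf fun walk =>
    (SimpleGraph.edist_le (walk.map f)).trans_eq (congrArg _ (walk.length_map f))

theorem edist_le_edist_add_two_of_edist_map_le_one (f : G →g G') {u v : V} {s t : W}
    (hs : G'.edist s (f u) ≤ 1) (ht : G'.edist t (f v) ≤ 1) :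
    G'.edist s t ≤ G.edist u v + 2 :=
  calc G'.edist s t
      ≤ G'.edist s (f u) + G'.edist (f u) (f v) + G'.edist (f v) t :=
        SimpleGraph.edist_triangle.trans (add_le_add_left SimpleGraph.edist_triangle _)
    _ ≤ 1 + G.edist u v + 1 := by
        rw [SimpleGraph.edist_comm (u := f v)]
        gcongr
        exact edist_map_le f u v
    _ = G.edist u v + 2 := by ring

theorem edist_le_of_exists_adj_lt {target : V} {potential : V → ℕ}
    (descent : ∀ u, u = target ∨ ∃ v, G.Adj u v ∧ potential v < potential u) (u : V) :
    G.edist u target ≤ potential u := by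
  induction hu : potential u using Nat.strong_induction_on generalizing u with
  | _ m ih =>
    subst hu
    rcases descent u with rfl | ⟨v, adj, lt⟩
    · simp
    · calc G.edist u target
          ≤ G.edist u v + G.edist v target := SimpleGraph.edist_triangle
        _ ≤ 1 + potential v :=
          add_le_add (SimpleGraph.edist_eq_one_iff_adj.mpr adj).le (ih _ lt v rfl)
        _ ≤ potential u := by exact_mod_cast (by lia : 1 + potential v ≤ potential u)

theorem connected_and_dist_le_of_ediam_le [Nonempty V] {n : ℕ} (h : G.ediam ≤ n) :
    G.Connected ∧ ∀ u v, G.dist u v ≤ n :=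
  ⟨SimpleGraph.connected_of_ediam_ne_top (ne_top_of_le_ne_top (ENat.natCast_ne_top n) h),
    fun _ _ => ENat.toNat_le_of_le_natCast (SimpleGraph.edist_le_ediam.trans h)⟩

end Metric

section Glue

variable {V : Type*} {G : SimpleGraph V} {p q : Fin 5 → V}

/-- The inclusion of the first copy of `G` into `glue G p q`. -/
def glueFst (G : SimpleGraph V) (p q : Fin 5 → V) : G →g glue G p q where
  toFun := Sum.inl
  map_rel' h := ⟨Sum.inl_injective.ne h.ne, .inl h⟩

/-- The inclusion of the second copy of `G` into `glue G p q`. -/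
def glueSnd (G : SimpleGraph V) (p q : Fin 5 → V) : G →g glue G p q where
  toFun := Sum.inr ∘ Sum.inl
  map_rel' h := ⟨(Sum.inr_injective.comp Sum.inl_injective).ne h.ne, .inl h⟩

theorem edist_glue_new_fst (i : Fin 5) :
    (glue G p q).edist (.inr (.inr i)) (glueFst G p q (p i)) = 1 :=
  SimpleGraph.edist_eq_one_iff_adj.mpr ⟨Sum.inr_ne_inl, .inl rfl⟩

theorem edist_glue_new_snd (i : Fin 5) :
    (glue G p q).edist (.inr (.inr i)) (glueSnd G p q (q i)) = 1 :=
  SimpleGraph.edist_eq_one_iff_adj.mpr ⟨Sum.inr_injective.ne Sum.inr_ne_inl, .inl rfl⟩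

theorem edist_glue_fst_snd_le (i : Fin 5) (u v : V) :
    (glue G p q).edist (glueFst G p q u) (glueSnd G p q v) ≤
      G.edist u (p i) + G.edist (q i) v + 2 := by
  have to_new : (glue G p q).edist (glueFst G p q u) (.inr (.inr i)) ≤ G.edist u (p i) + 1 :=
    SimpleGraph.edist_triangle.trans <| add_le_add (edist_map_le _ _ _)
      (SimpleGraph.edist_comm.trans_le (edist_glue_new_fst i).le)
  have from_new : (glue G p q).edist (.inr (.inr i)) (glueSnd G p q v) ≤ 1 + G.edist (q i) v :=
    SimpleGraph.edist_triangle.trans <| add_le_add (edist_glue_new_snd i).le (edist_map_le _ _ _)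
  calc (glue G p q).edist (glueFst G p q u) (glueSnd G p q v)
      ≤ (G.edist u (p i) + 1) + (1 + G.edist (q i) v) :=
        SimpleGraph.edist_triangle.trans (add_le_add to_new from_new)
    _ = G.edist u (p i) + G.edist (q i) v + 2 := by ring

theorem ediam_glue_le {n : ℕ∞} (within : G.ediam ≤ n)
    (across : ∀ u v, ∃ i, G.edist u (p i) + G.edist (q i) v ≤ n) :
    (glue G p q).ediam ≤ n + 2 := by
  have near_same {f : G →g glue G p q} {s t} {u v : V} (hs : (glue G p q).edist s (f u) ≤ 1)
      (ht : (glue G p q).edist t (f v) ≤ 1) : (glue G p q).edist s t ≤ n + 2 :=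
    (edist_le_edist_add_two_of_edist_map_le_one f hs ht).trans
      (add_le_add_left (SimpleGraph.edist_le_ediam.trans within) 2)
  have fst_snd (u v : V) : (glue G p q).edist (.inl u) (.inr (.inl v)) ≤ n + 2 :=
    let ⟨i, hi⟩ := across u v
    (edist_glue_fst_snd_le i u v).trans (add_le_add_left hi 2)
  have fst_near (u : V) : (glue G p q).edist (.inl u) (glueFst G p q u) ≤ 1 :=
    SimpleGraph.edist_self.trans_le zero_le_one
  have snd_near (u : V) : (glue G p q).edist (.inr (.inl u)) (glueSnd G p q u) ≤ 1 :=
    SimpleGraph.edist_self.trans_le zero_le_one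
  have new_fst (i : Fin 5) := (edist_glue_new_fst (G := G) (p := p) (q := q) i).le
  have new_snd (i : Fin 5) := (edist_glue_new_snd (G := G) (p := p) (q := q) i).le
  refine SimpleGraph.ediam_le_of_edist_le ?_
  rintro (u | u | i) (v | v | j)
  · exact near_same (fst_near u) (fst_near v)
  · exact fst_snd u v
  · exact near_same (fst_near u) (new_fst j)
  · exact SimpleGraph.edist_comm.trans_le (fst_snd v u)
  · exact near_same (snd_near u) (snd_near v)
  · exact near_same (snd_near u) (new_snd j)
  · exact near_same (new_fst i) (fst_near v)
  · exact near_same (new_snd i) (snd_near v)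
  · exact near_same (new_fst i) (new_fst j)

theorem ediam_glue_self_le {n : ℕ∞}
    (through : ∀ u v, ∃ i, G.edist u (p i) + G.edist (p i) v ≤ n) :
    (glue G p p).ediam ≤ n + 2 :=
  ediam_glue_le
    (SimpleGraph.ediam_le_of_edist_le fun u v =>
      let ⟨_, hi⟩ := through u v
      SimpleGraph.edist_triangle.trans hi)
    through

instance [DecidableEq V] [DecidableRel G.Adj] : DecidableRel (glue G p q).Adj := by
  intro u v
  refine @decidable_of_iff' _ _ (SimpleGraph.fromRel_adj _ u v) ?_
  rcases u with u | u | i <;> rcases v with v | v | j <;> dsimp only <;> infer_instance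

end Glue

instance : DecidableRel Hgraph.Adj :=
  inferInstanceAs (DecidableRel (SimpleGraph.fromRel _).Adj)

/-- The distance in `G₀` from the `i`-th distinguished vertex, found by breadth-first search and
tabulated on `H'`, on `H''` and on the distinguished vertices. Only the upper bound
`edist_distinguished_le` on the true distance is proved. -/
def distinguishedDist : Fin 5 → Fin 15 ⊕ Fin 15 ⊕ Fin 5 → ℕ :=
  ![Sum.elim ![2, 3, 4, 3, 1, 2, 3, 5, 4, 3, 4, 4, 3, 2, 4]
      (Sum.elim ![1, 2, 3, 3, 2, 3, 4, 4, 5, 4, 5, 5, 4, 3, 4] ![0, 3, 5, 5, 5]),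
    Sum.elim ![3, 4, 5, 4, 2, 3, 4, 4, 3, 2, 3, 3, 2, 1, 4]
      (Sum.elim ![4, 5, 4, 5, 3, 4, 5, 3, 2, 1, 3, 4, 3, 2, 4] ![3, 0, 5, 5, 5]),
    Sum.elim ![3, 2, 1, 3, 4, 3, 2, 2, 3, 4, 4, 3, 4, 5, 4]
      (Sum.elim ![5, 4, 3, 5, 4, 5, 4, 2, 3, 4, 3, 1, 2, 3, 4] ![5, 5, 0, 3, 5]),
    Sum.elim ![4, 3, 2, 4, 5, 4, 3, 1, 2, 3, 3, 2, 3, 4, 4]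
      (Sum.elim ![4, 3, 2, 3, 3, 2, 1, 3, 4, 5, 5, 4, 5, 4, 4] ![5, 5, 3, 0, 5]),
    Sum.elim ![4, 3, 4, 2, 4, 3, 4, 4, 3, 4, 2, 4, 3, 4, 1]
      (Sum.elim ![4, 3, 4, 2, 4, 3, 4, 4, 3, 4, 2, 4, 3, 4, 1] ![5, 5, 5, 5, 0])]

theorem exists_adj_distinguishedDist_lt : ∀ i u, u = Sum.inr (Sum.inr i) ∨
    ∃ v, G₀.Adj u v ∧ distinguishedDist i v < distinguishedDist i u := by
  unfold G₀
  decide +kernel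

theorem exists_distinguishedDist_add_le_six :
    ∀ u v, ∃ i, distinguishedDist i u + distinguishedDist i v ≤ 6 := by
  decide +kernel

theorem edist_distinguished_le (i : Fin 5) (u : Fin 15 ⊕ Fin 15 ⊕ Fin 5) :
    G₀.edist u (.inr (.inr i)) ≤ distinguishedDist i u :=
  edist_le_of_exists_adj_lt (exists_adj_distinguishedDist_lt i) u

theorem exists_edist_through_distinguished_le_six (u v : Fin 15 ⊕ Fin 15 ⊕ Fin 5) :
    ∃ i : Fin 5, G₀.edist u (.inr (.inr i)) + G₀.edist (.inr (.inr i)) v ≤ 6 := by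
  obtain ⟨i, hi⟩ := exists_distinguishedDist_add_le_six u v
  refine ⟨i, ?_⟩
  calc G₀.edist u (.inr (.inr i)) + G₀.edist (.inr (.inr i)) v
      ≤ distinguishedDist i u + distinguishedDist i v := by
        rw [SimpleGraph.edist_comm (v := v)]
        exact add_le_add (edist_distinguished_le i u) (edist_distinguished_le i v)
    _ ≤ 6 := by exact_mod_cast hi

theorem ediam_Gk_one_le_eight : (Gk 1).ediam ≤ 8 :=
  (ediam_glue_self_le exists_edist_through_distinguished_le_six).trans_eq (by norm_num)

/-- `G₁` is connected and any two of its vertices are at distance at most `8`. -/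
theorem stmt11 :
    (Gk 1).Connected ∧ ∀ u v, (Gk 1).dist u v ≤ 8 := by
  have : Nonempty (Vt 1) := ⟨distV 1 0⟩
  exact connected_and_dist_le_of_ediam_le ediam_Gk_one_le_eight
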